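/- Assume L/2 ≥ M ≥ r, L ≥ M+1, and π(x|Y) ≥ γ > 0 for all x, Y. Let S be a finite index set and, for each h ∈ S, let σ^{(h)} and σ̃^{(h)} be probability vectors on {1,…,M} with entries σ^{(h)}_{−j} and σ̃^{(h)}_{−i}. For the chain X = (x_1,…,x_{L+1}) ∼ p set v_l^{(h)} = Σ_{j=1}^{M} σ^{(h)}_{−j} x_{l−j} and ṽ_{L+1}^{(h)} = Σ_{i=1}^{M} σ̃^{(h)}_{−i} x_{L+1−i}. Let (x, X̄) and (z, Z̄) be independent, each distributed as the stationary window distribution μ̄ on 𝒳^{M+1}, written X̄ = (x_{−M},…,x_{−1}) and Z̄ = (z_{−M},…,z_{−1}), and set v^{(h)}(X̄) = Σ_{j=1}^{M} σ^{(h)}_{−j} x_{−j} and ṽ^{(h)}(Z̄) = Σ_{i=1}^{M} σ̃^{(h)}_{−i} z_{−i}. Let q(e) denote the single-token marginal of μ̄ at its last coordinate. Define A = (L−M)^{−1} Σ_{l=M+1}^{L} E_{X∼p}[ ( Σ_{k=1}^{d} 1{x_{L+1}=x_l=e_k}/q(e_k) − 1 ) · ∏_{h∈S} ⟨v_l^{(h)},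 ṽ_{L+1}^{(h)}⟩ ] and B = E[ ( Σ_{k=1}^{d} 1{x=z=e_k}/q(e_k) − 1 ) · ∏_{h∈S} ⟨ṽ^{(h)}(Z̄), v^{(h)}(X̄)⟩ ]. Then |A − B| ≤ 8M/(Lγ) + 16√(D₀+1) / ( L(1−λ)·γ^{|S|/2+1} ). -/

import Mathlib

open Finset

/-- Probability of the full sequence `x` (tokens indexed `0,…,T-1`, i.e. `x_1,…,x_T`)
under the `n`-gram Markov chain with parent offsets `r`, transition kernel `pk`,
and initial distribution `init` on the first `R` tokens. -/
noncomputable def ngramProb (d n R T : ℕ) (r : Fin n → ℕ)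
    (pk : (Fin n → Fin d) → Fin d → ℝ) (init : (Fin R → Fin d) → ℝ)
    (hRT : R ≤ T) (x : Fin T → Fin d) : ℝ :=
  init (fun i => x ⟨i.1, lt_of_lt_of_le i.2 hRT⟩) *
    ∏ l ∈ (Finset.Ico R T).attach,
      pk (fun k => x ⟨l.1 - r k, lt_of_le_of_lt (Nat.sub_le _ _) (Finset.mem_Ico.mp l.2).2⟩)
        (x ⟨l.1, (Finset.mem_Ico.mp l.2).2⟩)

/-- The window transition matrix `P_π` on `𝒳^R` of the `n`-gram chain:
`P(Z', Z) = π(z'_R | Z parents) · 1{Z' is the shift of Z}`. -/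
noncomputable def windowMatrix (d n R : ℕ) (hR : 0 < R) (r : Fin n → ℕ)
    (hrpos : ∀ k, 0 < r k) (pk : (Fin n → Fin d) → Fin d → ℝ) :
    Matrix (Fin R → Fin d) (Fin R → Fin d) ℝ :=
  Matrix.of fun Z' Z =>
    if ∀ j : Fin (R - 1),
        Z' ⟨j.1, lt_of_lt_of_le j.2 (Nat.sub_le R 1)⟩ = Z ⟨j.1 + 1, by have := j.2; omega⟩ then
      pk (fun k => Z ⟨R - r k, Nat.sub_lt hR (hrpos k)⟩) (Z' ⟨R - 1, Nat.sub_lt hR Nat.one_pos⟩)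
    else 0

/-- The matrix `K - √μ (√μ)ᵀ` where `K = diag(√μ)⁻¹ P_π diag(√μ)`. -/
noncomputable def specA (d n R : ℕ) (hR : 0 < R) (r : Fin n → ℕ) (hrpos : ∀ k, 0 < r k)
    (pk : (Fin n → Fin d) → Fin d → ℝ) (μ : (Fin R → Fin d) → ℝ) :
    Matrix (Fin R → Fin d) (Fin R → Fin d) ℝ :=
  (Matrix.diagonal fun Z => (Real.sqrt (μ Z))⁻¹) * windowMatrix d n R hR r hrpos pk *
      (Matrix.diagonal fun Z => Real.sqrt (μ Z)) -
    Matrix.vecMulVec (fun Z => Real.sqrt (μ Z)) (fun Z => Real.sqrt (μ Z))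

/-- Total variation distance: half the ℓ₁ distance. -/
noncomputable def tvDist {α : Type*} [Fintype α] (p q : α → ℝ) : ℝ :=
  (∑ w, |p w - q w|) / 2

/-- χ²-divergence `D_{χ²}(p ‖ q) = Σ_ω (p ω - q ω)² / q ω`. -/
noncomputable def chiSq {α : Type*} [Fintype α] (p q : α → ℝ) : ℝ :=
  ∑ w, (p w - q w) ^ 2 / q w

theorem icoLtSucc {M L : ℕ} (l : {m // m ∈ Finset.Ico M L}) : l.1 < L + 1 :=
  Nat.lt_succ_of_lt (Finset.mem_Ico.mp l.2).2

/-- The single-token marginal at the last coordinate of a distribution on `𝒳^{M+1}`. -/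
noncomputable def tokenMarg (d M : ℕ) (μb : (Fin (M + 1) → Fin d) → ℝ) (e : Fin d) : ℝ :=
  ∑ y : Fin (M + 1) → Fin d, if y ⟨M, Nat.lt_succ_self M⟩ = e then μb y else 0


/-! ### Helper material -/

/-- Extend a finite sequence to an infinite one by a default token. -/
def ex {d T : ℕ} (z : Fin d) (x : Fin T → Fin d) : ℕ → Fin d :=
  fun i => if h : i < T then x ⟨i, h⟩ else z

/-- One-step averaging at time `t`. -/
noncomputable def Av {d n : ℕ} (r : Fin n → ℕ) (pk : (Fin n → Fin d) → Fin d → ℝ) (t : ℕ)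
    (F : (ℕ → Fin d) → ℝ) : (ℕ → Fin d) → ℝ :=
  fun X => ∑ e, pk (fun k => X (t - r k)) e * F (Function.update X t e)

/-- Expectation of `F` under the chain of length `T` (signed initial weights allowed). -/
noncomputable def EE {d n : ℕ} (R : ℕ) (r : Fin n → ℕ) (pk : (Fin n → Fin d) → Fin d → ℝ)
    (z : Fin d) (T : ℕ) (init : (Fin R → Fin d) → ℝ) (F : (ℕ → Fin d) → ℝ) : ℝ :=
  ∑ x : Fin T → Fin d, (init (fun i : Fin R => ex z x i) *
    ∏ l ∈ Finset.Ico R T, pk (fun k => ex z x (l - r k)) (ex z x l)) * F (ex z x)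

/-- Shift. -/
def Shf {d : ℕ} (s : ℕ) (X : ℕ → Fin d) : ℕ → Fin d := fun i => X (s + i)

/-- Window of length `R` at `s`. -/
def Wd {d : ℕ} (R s : ℕ) (X : ℕ → Fin d) : Fin R → Fin d := fun i => X (s + i)

/-- dependence on the first coordinates only -/
def Dep {d : ℕ} (k : ℕ) (F : (ℕ → Fin d) → ℝ) : Prop :=
  ∀ X Y, (∀ i < k, X i = Y i) → F X = F Y

theorem ex_pos {d T : ℕ} (z : Fin d) (x : Fin T → Fin d) (i : ℕ) (h : i < T) :
    ex z x i = x ⟨i, h⟩ := dif_pos h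

theorem ex_snoc {d T : ℕ} (z : Fin d) (x : Fin T → Fin d) (e : Fin d) :
    ex z (Fin.snoc (α := fun _ => Fin d) x e : Fin (T + 1) → Fin d)
      = Function.update (ex z x) T e := by
  funext i
  unfold ex Function.update Fin.snoc
  rcases lt_trichotomy i T with h | h | h
  · simp [h, h.ne, Nat.lt_succ_of_lt h]
  · subst h; simp
  · have h1 : ¬ i < T := by omega
    have h2 : ¬ i < T + 1 := by omega
    simp [h1, h2, h.ne']

theorem ngram_eq {d n R T : ℕ} (r : Fin n → ℕ) (pk : (Fin n → Fin d) → Fin d → ℝ)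
    (init : (Fin R → Fin d) → ℝ) (hRT : R ≤ T) (z : Fin d) (x : Fin T → Fin d) :
    ngramProb d n R T r pk init hRT x = init (fun i : Fin R => ex z x i) *
      ∏ l ∈ Finset.Ico R T, pk (fun k => ex z x (l - r k)) (ex z x l) := by
  unfold ngramProb
  congr 1
  · congr 1
    funext i
    rw [ex_pos z x i (by omega)]
  · rw [← Finset.prod_attach (Finset.Ico R T)]
    refine Finset.prod_congr rfl fun l _ => ?_
    have hl := (Finset.mem_Ico.mp l.2).2
    rw [ex_pos z x l.1 hl]
    congr 1
    congr 1
    funext k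
    rw [ex_pos z x _ (by omega)]

section chain

variable {d n R : ℕ} (hR : 0 < R) (r : Fin n → ℕ) (hrpos : ∀ k, 0 < r k) (hrR : ∀ i, r i ≤ R)
  (pk : (Fin n → Fin d) → Fin d → ℝ) (z : Fin d)

theorem EE_succ (hR : 0 < R) (hrpos : ∀ k, 0 < r k) (T : ℕ) (hT : R ≤ T)
    (η : (Fin R → Fin d) → ℝ)
    (F : (ℕ → Fin d) → ℝ) : EE R r pk z (T + 1) η F = EE R r pk z T η (Av r pk T F) := by
  unfold EE
  rw [← (Fin.snocEquiv (fun _ : Fin (T + 1) => Fin d)).sum_comp, Fintype.sum_prod_type,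
    Finset.sum_comm]
  refine Finset.sum_congr rfl fun x _ => ?_
  unfold Av
  rw [Finset.mul_sum]
  refine Finset.sum_congr rfl fun e _ => ?_
  have h0 : (Fin.snocEquiv (fun _ : Fin (T + 1) => Fin d)) (e, x)
      = (Fin.snoc (α := fun _ => Fin d) x e : Fin (T + 1) → Fin d) := rfl
  rw [h0, ex_snoc, Finset.prod_Ico_succ_top hT]
  have h1 : (fun i : Fin R => Function.update (ex z x) T e i) = fun i : Fin R => ex z x i := by
    funext i
    exact Function.update_of_ne (by omega) _ _
  have h2 : ∏ l ∈ Finset.Ico R T, pk (fun k => Function.update (ex z x) T e (l - r k))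
        (Function.update (ex z x) T e l)
      = ∏ l ∈ Finset.Ico R T, pk (fun k => ex z x (l - r k)) (ex z x l) := by
    refine Finset.prod_congr rfl fun l hl => ?_
    have hl := (Finset.mem_Ico.mp hl).2
    rw [Function.update_of_ne (by omega)]
    congr 1
    congr 1
    funext k
    exact Function.update_of_ne (by omega) _ _
  have h3 : (fun k => Function.update (ex z x) T e (T - r k)) = fun k => ex z x (T - r k) := by
    funext k
    have := hrpos k
    exact Function.update_of_ne (by omega) _ _
  rw [h1, h2, h3, Function.update_self]
  ring

theorem EE_base (η : (Fin R → Fin d) → ℝ) (F : (ℕ → Fin d) → ℝ) :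
    EE R r pk z R η F = ∑ Z, η Z * F (ex z Z) := by
  unfold EE
  refine Finset.sum_congr rfl fun x _ => ?_
  have : (fun i : Fin R => ex z x i) = x := by
    funext i
    rw [ex_pos z x i i.2]
  rw [this]
  simp

theorem EE_sub (T : ℕ) (η : (Fin R → Fin d) → ℝ) (F G : (ℕ → Fin d) → ℝ) :
    EE R r pk z T η (fun X => F X - G X) = EE R r pk z T η F - EE R r pk z T η G := by
  simp only [EE, mul_sub, Finset.sum_sub_distrib]

theorem EE_sub_init (T : ℕ) (η ν : (Fin R → Fin d) → ℝ) (F : (ℕ → Fin d) → ℝ) :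
    EE R r pk z T (fun Z => η Z - ν Z) F = EE R r pk z T η F - EE R r pk z T ν F := by
  simp only [EE, sub_mul, Finset.sum_sub_distrib]

theorem EE_mul_const (T : ℕ) (η : (Fin R → Fin d) → ℝ) (F : (ℕ → Fin d) → ℝ) (c : ℝ) :
    EE R r pk z T η (fun X => F X * c) = EE R r pk z T η F * c := by
  simp only [EE, Finset.sum_mul, mul_assoc]

theorem EE_sum {τ : Type*} [Fintype τ] (T : ℕ) (η : (Fin R → Fin d) → ℝ)
    (F : τ → (ℕ → Fin d) → ℝ) :
    EE R r pk z T η (fun X => ∑ t, F t X) = ∑ t, EE R r pk z T η (F t) := by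
  simp only [EE, Finset.mul_sum]
  rw [Finset.sum_comm]

theorem Av_abs (hpk0 : ∀ Y e, 0 ≤ pk Y e) (hpk1 : ∀ Y, ∑ e, pk Y e = 1) (t : ℕ)
    (F : (ℕ → Fin d) → ℝ) (C : ℝ) (hF : ∀ X, |F X| ≤ C) (X) : |Av r pk t F X| ≤ C := by
  unfold Av
  refine (Finset.abs_sum_le_sum_abs _ _).trans ?_
  calc _ ≤ ∑ e, pk (fun k => X (t - r k)) e * C := by
        refine Finset.sum_le_sum fun e _ => ?_
        rw [abs_mul, abs_of_nonneg (hpk0 _ _)]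
        exact mul_le_mul_of_nonneg_left (hF _) (hpk0 _ _)
    _ = C := by rw [← Finset.sum_mul, hpk1, one_mul]

theorem EE_abs (hR : 0 < R) (hrpos : ∀ k, 0 < r k) (hpk0 : ∀ Y e, 0 ≤ pk Y e)
    (hpk1 : ∀ Y, ∑ e, pk Y e = 1) (j : ℕ)
    (η : (Fin R → Fin d) → ℝ) (F : (ℕ → Fin d) → ℝ) (C : ℝ) (hF : ∀ X, |F X| ≤ C) :
    |EE R r pk z (R + j) η F| ≤ (∑ Z, |η Z|) * C := by
  induction j generalizing F with
  | zero =>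
    rw [Nat.add_zero, EE_base, Finset.sum_mul]
    refine (Finset.abs_sum_le_sum_abs _ _).trans (Finset.sum_le_sum fun Z _ => ?_)
    rw [abs_mul]
    exact mul_le_mul_of_nonneg_left (hF _) (abs_nonneg _)
  | succ j ih =>
    rw [← Nat.add_assoc, EE_succ r pk z hR hrpos _ (by omega)]
    exact ih _ (Av_abs r pk hpk0 hpk1 _ F C hF)

theorem EE_mono (hpk0 : ∀ Y e, 0 ≤ pk Y e) (T : ℕ) (η : (Fin R → Fin d) → ℝ) (hη : ∀ Z, 0 ≤ η Z)
    (F G : (ℕ → Fin d) → ℝ) (h : ∀ X, F X ≤ G X) :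
    EE R r pk z T η F ≤ EE R r pk z T η G := by
  refine Finset.sum_le_sum fun x _ => mul_le_mul_of_nonneg_left (h _) ?_
  exact mul_nonneg (hη _) (Finset.prod_nonneg fun _ _ => hpk0 _ _)

theorem Av_mul (hrpos : ∀ k, 0 < r k) (t : ℕ) (a F : (ℕ → Fin d) → ℝ) (ha : Dep t a) :
    Av r pk t (fun X => a X * F X) = fun X => a X * Av r pk t F X := by
  funext X
  unfold Av
  rw [Finset.mul_sum]
  refine Finset.sum_congr rfl fun e _ => ?_
  beta_reduce
  rw [ha (Function.update X t e) X fun i hi => Function.update_of_ne (by omega) _ _]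
  ring

theorem Av_dep (hpk1 : ∀ Y, ∑ e, pk Y e = 1) (t : ℕ) (a : (ℕ → Fin d) → ℝ) (ha : Dep t a) :
    Av r pk t a = a := by
  funext X
  unfold Av
  have : ∀ e, a (Function.update X t e) = a X := fun e =>
    ha (Function.update X t e) X fun i hi => Function.update_of_ne (by omega) _ _
  simp only [this]
  rw [← Finset.sum_mul, hpk1, one_mul]

theorem dep_mono {k k' : ℕ} (h : k ≤ k') (F : (ℕ → Fin d) → ℝ) (hF : Dep k F) : Dep k' F :=
  fun X Y hXY => hF X Y fun i hi => hXY i (by omega)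

theorem EE_dep (hR : 0 < R) (hrpos : ∀ k, 0 < r k) (hpk1 : ∀ Y, ∑ e, pk Y e = 1) (T j : ℕ)
    (hT : R ≤ T) (η : (Fin R → Fin d) → ℝ) (a : (ℕ → Fin d) → ℝ) (ha : Dep T a) :
    EE R r pk z (T + j) η a = EE R r pk z T η a := by
  induction j with
  | zero => rfl
  | succ j ih =>
    rw [← Nat.add_assoc, EE_succ r pk z hR hrpos _ (by omega),
      Av_dep r pk hpk1 _ a (dep_mono (by omega) a ha), ih]

theorem EE_const (hR : 0 < R) (hrpos : ∀ k, 0 < r k) (hpk1 : ∀ Y, ∑ e, pk Y e = 1) (j : ℕ)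
    (η : (Fin R → Fin d) → ℝ) (c : ℝ) :
    EE R r pk z (R + j) η (fun _ => c) = (∑ Z, η Z) * c := by
  rw [EE_dep r pk z hR hrpos hpk1 R j le_rfl η _ (fun _ _ _ => rfl), EE_base, Finset.sum_mul]

theorem Av_shift (hrR : ∀ i, r i ≤ R) (t s : ℕ) (ht : R ≤ t) (F : (ℕ → Fin d) → ℝ) :
    Av r pk (s + t) (fun X => F (Shf s X)) = fun X => Av r pk t F (Shf s X) := by
  funext X
  unfold Av
  refine Finset.sum_congr rfl fun e _ => ?_
  congr 1
  · congr 1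
    funext k
    have := hrR k
    show X _ = X _
    congr 1
    omega
  · beta_reduce
    congr 1
    funext i
    unfold Shf Function.update
    by_cases h : i = t
    · subst h; simp
    · simp [h]

theorem Av_depdrop (hR : 0 < R) (hrpos : ∀ k, 0 < r k) (t : ℕ) (ht : R ≤ t)
    (F : (ℕ → Fin d) → ℝ) (hF : Dep (t + 1) F) : Dep t (Av r pk t F) := by
  intro X Y hXY
  unfold Av
  refine Finset.sum_congr rfl fun e _ => ?_
  congr 1
  · congr 1
    funext k
    have := hrpos k
    exact hXY _ (by omega)
  · refine hF _ _ fun i hi => ?_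
    unfold Function.update
    by_cases h : i = t
    · subst h; simp
    · simp [h]; exact hXY i (by omega)

/-- shifted window with a new token -/
def shw (z : Fin d) (Z : Fin R → Fin d) (e : Fin d) : Fin R → Fin d :=
  fun i => Function.update (ex z Z) R e (1 + i)

/-- adjoint window operator -/
noncomputable def PT (z : Fin d) (c : (Fin R → Fin d) → ℝ) : (Fin R → Fin d) → ℝ :=
  fun Z => ∑ e, pk (fun k => ex z Z (R - r k)) e * c (shw z Z e)

theorem window_sum (hR : 0 < R) (hrpos : ∀ k, 0 < r k) (c : (Fin R → Fin d) → ℝ)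
    (Z : Fin R → Fin d) :
    ∑ Z', windowMatrix d n R hR r hrpos pk Z' Z * c Z' = PT r pk z c Z := by
  unfold PT
  have hpar : (fun k => ex z Z (R - r k)) =
      (fun k => Z ⟨R - r k, Nat.sub_lt hR (hrpos k)⟩) := by
    funext k
    exact ex_pos _ _ _ _
  rw [hpar]
  have key : ∀ Z', windowMatrix d n R hR r hrpos pk Z' Z * c Z' =
      ∑ e, if Z' = shw z Z e then
        pk (fun k => Z ⟨R - r k, Nat.sub_lt hR (hrpos k)⟩) e * c (shw z Z e) else 0 := by
    intro Z'
    have hlast : ∀ e, shw z Z e ⟨R - 1, Nat.sub_lt hR Nat.one_pos⟩ = e := by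
      intro e
      unfold shw
      have : 1 + (R - 1) = R := by omega
      simp [this]
    unfold windowMatrix
    rw [Matrix.of_apply]
    split_ifs with h
    · have hZ' : Z' = shw z Z (Z' ⟨R - 1, Nat.sub_lt hR Nat.one_pos⟩) := by
        funext i
        by_cases hi : i.1 < R - 1
        · have h1 := h ⟨i.1, hi⟩
          unfold shw
          rw [Function.update_of_ne (by omega), ex_pos _ _ _ (by omega)]
          simp only at h1
          refine Eq.trans h1 ?_
          congr 1
          ext
          exact Nat.add_comm _ _
        · have hi2 : i = ⟨R - 1, Nat.sub_lt hR Nat.one_pos⟩ := by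
            ext; have := i.2; simp only; omega
          rw [hi2, hlast]
      rw [Finset.sum_eq_single (Z' ⟨R - 1, Nat.sub_lt hR Nat.one_pos⟩)]
      · rw [if_pos hZ', ← hZ']
      · intro e _ he
        rw [if_neg]
        intro h2
        apply he
        rw [h2, hlast]
      · simp
    · rw [zero_mul]
      symm
      refine Finset.sum_eq_zero fun e _ => if_neg ?_
      intro h2
      apply h
      intro j
      rw [h2]
      unfold shw
      have := j.2
      rw [Function.update_of_ne (by simp only; omega), ex_pos _ _ _ (by simp only; omega)]
      congr 1
      ext
      exact Nat.add_comm _ _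
  simp only [key]
  rw [Finset.sum_comm]
  refine Finset.sum_congr rfl fun e _ => ?_
  simp

/-- window push-forward -/
noncomputable def Pop (hR : 0 < R) (hrpos : ∀ k, 0 < r k) (η : (Fin R → Fin d) → ℝ) :
    (Fin R → Fin d) → ℝ :=
  fun Z' => ∑ Z, windowMatrix d n R hR r hrpos pk Z' Z * η Z

theorem Pop_pair (hR : 0 < R) (hrpos : ∀ k, 0 < r k) (η c : (Fin R → Fin d) → ℝ) :
    ∑ Z', Pop r pk hR hrpos η Z' * c Z' = ∑ Z, η Z * PT r pk z c Z := by
  unfold Pop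
  simp only [Finset.sum_mul]
  rw [Finset.sum_comm]
  refine Finset.sum_congr rfl fun Z _ => ?_
  rw [← window_sum r pk z hR hrpos, Finset.mul_sum]
  refine Finset.sum_congr rfl fun Z' _ => ?_
  ring

theorem EE_shift_one (hR : 0 < R) (hrpos : ∀ k, 0 < r k) (hrR : ∀ i, r i ≤ R) (j : ℕ)
    (η : (Fin R → Fin d) → ℝ) (F : (ℕ → Fin d) → ℝ) :
    EE R r pk z (R + j + 1) η (fun X => F (Shf 1 X))
      = EE R r pk z (R + j) (Pop r pk hR hrpos η) F := by
  induction j generalizing F with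
  | zero =>
    rw [Nat.add_zero, EE_succ r pk z hR hrpos _ le_rfl, EE_base]
    refine Eq.trans ?_ (EE_base r pk z (Pop r pk hR hrpos η) F).symm
    rw [Pop_pair r pk z hR hrpos η (fun Z => F (ex z Z))]
    refine Finset.sum_congr rfl fun Z _ => ?_
    congr 1
    unfold Av PT
    refine Finset.sum_congr rfl fun e _ => ?_
    congr 1
    beta_reduce
    congr 1
    funext i
    unfold Shf
    by_cases hi : i < R
    · rw [ex_pos _ _ _ hi]; rfl
    · rw [Function.update_of_ne (by omega)]
      unfold ex
      rw [dif_neg (by omega), dif_neg hi]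
  | succ j ih =>
    rw [EE_succ r pk z hR hrpos _ (by omega)]
    have e1 : R + (j + 1) = 1 + (R + j) := by omega
    rw [e1, Av_shift r pk hrR (R + j) 1 (by omega), Nat.add_comm 1 (R + j), ih,
      EE_succ r pk z hR hrpos _ (by omega)]

theorem EE_shift (hR : 0 < R) (hrpos : ∀ k, 0 < r k) (hrR : ∀ i, r i ≤ R) (j s : ℕ)
    (η : (Fin R → Fin d) → ℝ) (F : (ℕ → Fin d) → ℝ) :
    EE R r pk z (R + j + s) η (fun X => F (Shf s X))
      = EE R r pk z (R + j) ((Pop r pk hR hrpos)^[s] η) F := by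
  induction s generalizing η F with
  | zero =>
    simp only [Nat.add_zero, Function.iterate_zero, id]
    congr 1
    funext X
    congr 1
    funext i
    simp [Shf]
  | succ s ih =>
    rw [Function.iterate_succ_apply, ← ih]
    have := EE_shift_one r pk z hR hrpos hrR (j + s) η (fun X => F (Shf s X))
    rw [← Nat.add_assoc] at this
    rw [← Nat.add_assoc, ← this]
    congr 1
    funext X
    congr 1
    funext i
    unfold Shf
    congr 1
    omega

theorem Pop_sum (hR : 0 < R) (hrpos : ∀ k, 0 < r k) (hpk1 : ∀ Y, ∑ e, pk Y e = 1)
    (η : (Fin R → Fin d) → ℝ) : ∑ Z, Pop r pk hR hrpos η Z = ∑ Z, η Z := by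
  rcases Nat.eq_zero_or_pos d with h | h
  · subst h
    exact Finset.sum_congr rfl fun Z _ => (Z ⟨0, hR⟩).elim0
  have := Pop_pair r pk ⟨0, h⟩ hR hrpos η (fun _ => 1)
  simpa [PT, hpk1] using this

/-- Reduction of a function of a longer window to a window function. -/
theorem reduce (hR : 0 < R) (hrpos : ∀ k, 0 < r k) (hrR : ∀ i, r i ≤ R)
    (hpk0 : ∀ Y e, 0 ≤ pk Y e) (hpk1 : ∀ Y, ∑ e, pk Y e = 1)
    (μ : (Fin R → Fin d) → ℝ) (hμ : ∀ Z, 0 ≤ μ Z) (j : ℕ) (F : (ℕ → Fin d) → ℝ)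
    (hF : Dep (R + j) F) :
    ∃ c : (Fin R → Fin d) → ℝ,
      (∀ s a η, Dep (s + R) a → EE R r pk z (s + (R + j)) η (fun X => a X * F (Shf s X))
        = EE R r pk z (s + R) η (fun X => a X * c (Wd R s X))) ∧
      ∑ Z, μ Z * c Z ^ 2 ≤ EE R r pk z (R + j) μ (fun X => F X ^ 2) := by
  induction j generalizing F with
  | zero =>
    refine ⟨fun Z => F (ex z Z), fun s a η _ => ?_, ?_⟩
    · rw [Nat.add_zero]
      congr 1
      funext X
      congr 1
      refine hF _ _ fun i hi => ?_
      rw [ex_pos _ _ _ (by omega)]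
      rfl
    · rw [Nat.add_zero, EE_base]
  | succ j ih =>
    obtain ⟨c, hc1, hc2⟩ := ih (Av r pk (R + j) F)
      (Av_depdrop r pk hR hrpos _ (by omega) F hF)
    refine ⟨c, fun s a η ha => ?_, hc2.trans ?_⟩
    · rw [← hc1 s a η ha]
      have e1 : s + (R + (j + 1)) = s + (R + j) + 1 := by omega
      rw [e1, EE_succ r pk z hR hrpos _ (by omega),
        Av_mul r pk hrpos _ a _ (dep_mono (by omega) a ha),
        Av_shift r pk hrR (R + j) s (by omega)]
    · rw [← Nat.add_assoc, EE_succ r pk z hR hrpos _ (by omega)]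
      refine EE_mono r pk z hpk0 _ μ hμ _ _ fun X => ?_
      unfold Av
      have := Finset.sum_sq_le_sum_mul_sum_of_sq_le_mul Finset.univ
        (f := fun e => pk (fun k => X (R + j - r k)) e)
        (g := fun e => pk (fun k => X (R + j - r k)) e *
          F (Function.update X (R + j) e) ^ 2)
        (r := fun e => pk (fun k => X (R + j - r k)) e *
          F (Function.update X (R + j) e)) (fun e _ => hpk0 _ _)
        (fun e _ => mul_nonneg (hpk0 _ _) (sq_nonneg _)) (fun e _ => le_of_eq (by ring))
      rw [hpk1, one_mul] at this
      exact this

theorem EE_window (hR : 0 < R) (hrpos : ∀ k, 0 < r k) (hrR : ∀ i, r i ≤ R)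
    (s m : ℕ) (a : (ℕ → Fin d) → ℝ) (ha : Dep (s + R) a)
    (η c : (Fin R → Fin d) → ℝ) :
    EE R r pk z (s + m + R) η (fun X => a X * c (Wd R (s + m) X))
      = EE R r pk z (s + R) η (fun X => a X * ((PT r pk z)^[m] c) (Wd R s X)) := by
  induction m generalizing c with
  | zero => rfl
  | succ m ih =>
    rw [Function.iterate_succ_apply, ← ih]
    have e1 : s + (m + 1) + R = s + m + R + 1 := by omega
    rw [e1, EE_succ r pk z hR hrpos _ (by omega),
      Av_mul r pk hrpos _ a _ (dep_mono (by omega) a ha)]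
    congr 1
    funext X
    congr 1
    unfold Av PT
    refine Finset.sum_congr rfl fun e _ => ?_
    congr 1
    · congr 1
      funext k
      have := hrR k
      have := hrpos k
      rw [ex_pos _ _ _ (by omega)]
      unfold Wd
      congr 1
      simp only
      omega
    · beta_reduce
      congr 1
      funext i
      unfold Wd shw Function.update
      by_cases hi : i.1 + 1 = R
      · have h1 : s + (m + 1) + i.1 = s + m + R := by omega
        have h2 : 1 + i.1 = R := by omega
        simp [h1, h2]
      · have h1 : s + (m + 1) + i.1 ≠ s + m + R := by omega
        have h2 : 1 + i.1 ≠ R := by omega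
        have h3 : 1 + i.1 < R := by have := i.2; omega
        simp only [h1, h2, dif_neg, not_false_eq_true]
        rw [ex_pos _ _ _ h3]
        congr 1
        simp only
        omega

theorem spec_apply (hR : 0 < R) (hrpos : ∀ k, 0 < r k) (μ v : (Fin R → Fin d) → ℝ)
    (Z' : Fin R → Fin d) :
    Matrix.mulVec (specA d n R hR r hrpos pk μ) v Z' =
      (Real.sqrt (μ Z'))⁻¹ * Pop r pk hR hrpos (fun Z => Real.sqrt (μ Z) * v Z) Z'
        - Real.sqrt (μ Z') * ∑ Z, Real.sqrt (μ Z) * v Z := by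
  unfold specA Pop
  rw [Matrix.sub_mulVec, Pi.sub_apply]
  congr 1
  · rw [← Matrix.mulVec_mulVec, ← Matrix.mulVec_mulVec, Matrix.mulVec_diagonal]
    congr 1
    simp only [Matrix.mulVec, dotProduct]
    refine Finset.sum_congr rfl fun Z _ => ?_
    congr 1
    exact Matrix.mulVec_diagonal _ _ _
  · simp only [Matrix.mulVec, dotProduct, Matrix.vecMulVec_apply, Finset.mul_sum, mul_assoc]

theorem hop_sq {hR : 0 < R} {hrpos : ∀ k, 0 < r k} {μ : (Fin R → Fin d) → ℝ}
    {lam : ℝ}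
    (hop : ∀ v : (Fin R → Fin d) → ℝ,
      Real.sqrt (∑ Z', Matrix.mulVec (specA d n R hR r hrpos pk μ) v Z' ^ 2)
        ≤ lam * Real.sqrt (∑ Z, v Z ^ 2)) (v : (Fin R → Fin d) → ℝ) :
    ∑ Z', Matrix.mulVec (specA d n R hR r hrpos pk μ) v Z' ^ 2 ≤ lam ^ 2 * ∑ Z, v Z ^ 2 := by
  have h1 := pow_le_pow_left₀ (Real.sqrt_nonneg _) (hop v) 2
  rwa [mul_pow, Real.sq_sqrt (Finset.sum_nonneg fun _ _ => sq_nonneg _),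
    Real.sq_sqrt (Finset.sum_nonneg fun _ _ => sq_nonneg _)] at h1

theorem spec_fwd {hR : 0 < R} {hrpos : ∀ k, 0 < r k} {μ : (Fin R → Fin d) → ℝ}
    (hμpos : ∀ Z, 0 < μ Z) {lam : ℝ}
    (hop : ∀ v : (Fin R → Fin d) → ℝ,
      Real.sqrt (∑ Z', Matrix.mulVec (specA d n R hR r hrpos pk μ) v Z' ^ 2)
        ≤ lam * Real.sqrt (∑ Z, v Z ^ 2)) (η : (Fin R → Fin d) → ℝ) (h0 : ∑ Z, η Z = 0) :
    ∑ Z, Pop r pk hR hrpos η Z ^ 2 / μ Z ≤ lam ^ 2 * ∑ Z, η Z ^ 2 / μ Z := by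
  have h := hop_sq r pk hop (fun Z => (Real.sqrt (μ Z))⁻¹ * η Z)
  have hs : ∀ Z, Real.sqrt (μ Z) ≠ 0 := fun Z => (Real.sqrt_pos.mpr (hμpos Z)).ne'
  have h1 : ∀ Z, Real.sqrt (μ Z) * ((Real.sqrt (μ Z))⁻¹ * η Z) = η Z := fun Z =>
    mul_inv_cancel_left₀ (hs Z) _
  simp only [spec_apply, h1, h0, mul_zero, sub_zero] at h
  simp only [mul_pow, inv_pow, Real.sq_sqrt (hμpos _).le] at h
  simpa only [div_eq_inv_mul] using h

theorem spec_bwd {hR : 0 < R} {hrpos : ∀ k, 0 < r k} {μ : (Fin R → Fin d) → ℝ}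
    (hμpos : ∀ Z, 0 < μ Z) {lam : ℝ}
    (hop : ∀ v : (Fin R → Fin d) → ℝ,
      Real.sqrt (∑ Z', Matrix.mulVec (specA d n R hR r hrpos pk μ) v Z' ^ 2)
        ≤ lam * Real.sqrt (∑ Z, v Z ^ 2)) (c : (Fin R → Fin d) → ℝ) (h0 : ∑ Z, μ Z * c Z = 0) :
    ∑ Z, μ Z * PT r pk z c Z ^ 2 ≤ lam ^ 2 * ∑ Z, μ Z * c Z ^ 2 := by
  set w : (Fin R → Fin d) → ℝ := fun Z => Real.sqrt (μ Z) * PT r pk z c Z with hw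
  have hs : ∀ Z, Real.sqrt (μ Z) ≠ 0 := fun Z => (Real.sqrt_pos.mpr (hμpos Z)).ne'
  have hss : ∀ Z, Real.sqrt (μ Z) * Real.sqrt (μ Z) = μ Z := fun Z =>
    Real.mul_self_sqrt (hμpos Z).le
  have h := hop_sq r pk hop w
  have hpair : ∑ Z', (Real.sqrt (μ Z') * c Z') *
      Matrix.mulVec (specA d n R hR r hrpos pk μ) w Z' = ∑ Z, w Z ^ 2 := by
    have e1 : ∀ Z', (Real.sqrt (μ Z') * c Z') *
        Matrix.mulVec (specA d n R hR r hrpos pk μ) w Z' =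
        Pop r pk hR hrpos (fun Z => Real.sqrt (μ Z) * w Z) Z' * c Z' -
          (μ Z' * c Z') * ∑ Z, Real.sqrt (μ Z) * w Z := by
      intro Z'
      rw [spec_apply]
      have h5 := mul_inv_cancel₀ (hs Z')
      have h6 := hss Z'
      linear_combination (c Z' * Pop r pk hR hrpos (fun Z => Real.sqrt (μ Z) * w Z) Z') * h5 -
        (c Z' * ∑ Z, Real.sqrt (μ Z) * w Z) * h6
    simp only [e1, Finset.sum_sub_distrib]
    rw [← Finset.sum_mul, h0, zero_mul, sub_zero, Pop_pair r pk z]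
    refine Finset.sum_congr rfl fun Z _ => ?_
    simp only [hw]
    ring
  have hcs := Finset.sum_mul_sq_le_sq_mul_sq Finset.univ
    (fun Z' => Real.sqrt (μ Z') * c Z')
    (fun Z' => Matrix.mulVec (specA d n R hR r hrpos pk μ) w Z')
  rw [hpair] at hcs
  have hb : ∑ Z, (Real.sqrt (μ Z) * c Z) ^ 2 = ∑ Z, μ Z * c Z ^ 2 := by
    simp only [mul_pow, Real.sq_sqrt (hμpos _).le]
  have ha : ∑ Z, w Z ^ 2 = ∑ Z, μ Z * PT r pk z c Z ^ 2 := by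
    simp only [hw, mul_pow, Real.sq_sqrt (hμpos _).le]
  rw [hb] at hcs
  rw [ha] at hcs h
  set A := ∑ Z, μ Z * PT r pk z c Z ^ 2
  set B := ∑ Z, μ Z * c Z ^ 2
  have hA : 0 ≤ A := Finset.sum_nonneg fun Z _ => mul_nonneg (hμpos Z).le (sq_nonneg _)
  have hB : 0 ≤ B := Finset.sum_nonneg fun Z _ => mul_nonneg (hμpos Z).le (sq_nonneg _)
  have h2 : A ^ 2 ≤ B * (lam ^ 2 * A) := hcs.trans (mul_le_mul_of_nonneg_left h hB)
  rcases hA.eq_or_lt with h3 | h3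
  · rw [← h3]; positivity
  · refine le_of_mul_le_mul_right ?_ h3
    linarith [h2, sq A]

theorem Pop_iter {hR : 0 < R} {hrpos : ∀ k, 0 < r k} (hpk1 : ∀ Y, ∑ e, pk Y e = 1)
    {μ : (Fin R → Fin d) → ℝ}
    (hμpos : ∀ Z, 0 < μ Z) {lam : ℝ}
    (hop : ∀ v : (Fin R → Fin d) → ℝ,
      Real.sqrt (∑ Z', Matrix.mulVec (specA d n R hR r hrpos pk μ) v Z' ^ 2)
        ≤ lam * Real.sqrt (∑ Z, v Z ^ 2)) (s : ℕ) (η : (Fin R → Fin d) → ℝ)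
    (h0 : ∑ Z, η Z = 0) :
    ∑ Z, (Pop r pk hR hrpos)^[s] η Z ^ 2 / μ Z ≤ (lam ^ s) ^ 2 * ∑ Z, η Z ^ 2 / μ Z := by
  induction s generalizing η with
  | zero => simp
  | succ s ih =>
    rw [Function.iterate_succ_apply]
    refine (ih _ (by rw [Pop_sum r pk hR hrpos hpk1, h0])).trans ?_
    calc _ ≤ (lam ^ s) ^ 2 * (lam ^ 2 * ∑ Z, η Z ^ 2 / μ Z) :=
          mul_le_mul_of_nonneg_left (spec_fwd r pk hμpos hop η h0) (sq_nonneg _)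
      _ = _ := by ring

theorem PT_iter {hR : 0 < R} {hrpos : ∀ k, 0 < r k}
    {μ : (Fin R → Fin d) → ℝ}
    (hμpos : ∀ Z, 0 < μ Z) (hst : Pop r pk hR hrpos μ = μ) {lam : ℝ}
    (hop : ∀ v : (Fin R → Fin d) → ℝ,
      Real.sqrt (∑ Z', Matrix.mulVec (specA d n R hR r hrpos pk μ) v Z' ^ 2)
        ≤ lam * Real.sqrt (∑ Z, v Z ^ 2)) (s : ℕ) (c : (Fin R → Fin d) → ℝ)
    (h0 : ∑ Z, μ Z * c Z = 0) :
    ∑ Z, μ Z * (PT r pk z)^[s] c Z ^ 2 ≤ (lam ^ s) ^ 2 * ∑ Z, μ Z * c Z ^ 2 := by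
  induction s generalizing c with
  | zero => simp
  | succ s ih =>
    rw [Function.iterate_succ_apply]
    refine (ih _ (by rw [← Pop_pair r pk z hR hrpos, hst, h0])).trans ?_
    calc _ ≤ (lam ^ s) ^ 2 * (lam ^ 2 * ∑ Z, μ Z * c Z ^ 2) :=
          mul_le_mul_of_nonneg_left (spec_bwd r pk z hμpos hop c h0) (sq_nonneg _)
      _ = _ := by ring

theorem l1_bound {α : Type*} [Fintype α] (μ η : α → ℝ) (hμ : ∀ Z, 0 < μ Z) (h1 : ∑ Z, μ Z = 1) :
    (∑ Z, |η Z|) ^ 2 ≤ ∑ Z, η Z ^ 2 / μ Z := by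
  have := Finset.sum_sq_le_sum_mul_sum_of_sq_le_mul Finset.univ
    (f := μ) (g := fun Z => η Z ^ 2 / μ Z) (r := fun Z => |η Z|) (fun Z _ => (hμ Z).le)
    (fun Z _ => div_nonneg (sq_nonneg _) (hμ Z).le)
    (fun Z _ => by rw [sq_abs, mul_div_cancel₀ _ (hμ Z).ne'])
  rwa [h1, one_mul] at this

end chain

section chain2

variable {d n R : ℕ} (r : Fin n → ℕ) (pk : (Fin n → Fin d) → Fin d → ℝ) (z : Fin d)

theorem Shf_zero (X : ℕ → Fin d) : Shf 0 X = X := by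
  funext i; simp [Shf]

theorem EE_CS {τ : Type*} [Fintype τ] (hpk0 : ∀ Y e, 0 ≤ pk Y e) (T : ℕ)
    (η : (Fin R → Fin d) → ℝ) (hη : ∀ Z, 0 ≤ η Z) (a h : τ → (ℕ → Fin d) → ℝ) :
    (∑ t, EE R r pk z T η (fun X => a t X * h t X)) ^ 2 ≤
      (∑ t, EE R r pk z T η (fun X => a t X ^ 2)) *
        (∑ t, EE R r pk z T η (fun X => h t X ^ 2)) := by
  unfold EE
  simp only [← Fintype.sum_prod_type']
  have hw : ∀ x : Fin T → Fin d, 0 ≤ η (fun i : Fin R => ex z x i) *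
    ∏ l ∈ Finset.Ico R T, pk (fun k => ex z x (l - r k)) (ex z x l) := fun x =>
      mul_nonneg (hη _) (Finset.prod_nonneg fun _ _ => hpk0 _ _)
  refine Finset.sum_sq_le_sum_mul_sum_of_sq_le_mul Finset.univ
    (fun p _ => mul_nonneg (hw p.2) (sq_nonneg _))
    (fun p _ => mul_nonneg (hw p.2) (sq_nonneg _)) (fun p _ => le_of_eq ?_)
  ring

theorem covL {hR : 0 < R} {hrpos : ∀ k, 0 < r k} (hrR : ∀ i, r i ≤ R)
    (hpk0 : ∀ Y e, 0 ≤ pk Y e) (hpk1 : ∀ Y, ∑ e, pk Y e = 1)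
    {μ : (Fin R → Fin d) → ℝ} (hμpos : ∀ Z, 0 < μ Z) (hμ1 : ∑ Z, μ Z = 1)
    (hst : Pop r pk hR hrpos μ = μ) {lam : ℝ}
    (hop : ∀ v : (Fin R → Fin d) → ℝ,
      Real.sqrt (∑ Z', Matrix.mulVec (specA d n R hR r hrpos pk μ) v Z' ^ 2)
        ≤ lam * Real.sqrt (∑ Z, v Z ^ 2))
    {τ : Type*} [Fintype τ] (j m : ℕ) (hm : R ≤ m) (a b : τ → (ℕ → Fin d) → ℝ)
    (ha : ∀ t, Dep (R + j) (a t)) (hb : ∀ t, Dep (R + j) (b t)) (Ca Cb : ℝ)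
    (hCa : ∀ X, ∑ t, a t X ^ 2 ≤ Ca) (hCb : ∀ X, ∑ t, b t X ^ 2 ≤ Cb) :
    (EE R r pk z (j + m + (R + j)) μ (fun X => ∑ t, a t X * b t (Shf (j + m) X))
      - ∑ t, EE R r pk z (R + j) μ (a t) * EE R r pk z (R + j) μ (b t)) ^ 2
      ≤ Ca * ((lam ^ m) ^ 2 * Cb) := by
  have hμ0 : ∀ Z, 0 ≤ μ Z := fun Z => (hμpos Z).le
  choose c hc1 hc2 using fun t => reduce r pk z hR hrpos hrR hpk0 hpk1 μ hμ0 j (b t) (hb t)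
  set mean : τ → ℝ := fun t => ∑ Z, μ Z * c t Z with hmean
  have hm1 : ∀ t, EE R r pk z (R + j) μ (b t) = mean t := by
    intro t
    have h := hc1 t 0 (fun _ => 1) μ (fun _ _ _ => rfl)
    simp only [Shf_zero, one_mul, Nat.zero_add] at h
    rw [h, EE_base]
    refine Finset.sum_congr rfl fun Z _ => ?_
    congr 2
    funext i
    unfold Wd
    rw [Nat.zero_add, ex_pos _ _ _ i.2]
  set h : τ → (Fin R → Fin d) → ℝ := fun t => (PT r pk z)^[m] (fun Z => c t Z - mean t) with hh
  have key : EE R r pk z (j + m + (R + j)) μ (fun X => ∑ t, a t X * b t (Shf (j + m) X))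
      - ∑ t, EE R r pk z (R + j) μ (a t) * EE R r pk z (R + j) μ (b t)
      = ∑ t, EE R r pk z (j + R) μ (fun X => a t X * h t (Wd R j X)) := by
    rw [EE_sum, ← Finset.sum_sub_distrib]
    refine Finset.sum_congr rfl fun t _ => ?_
    rw [hc1 t (j + m) (a t) μ (dep_mono (by omega) _ (ha t)), hm1,
      ← EE_dep r pk z hR hrpos hpk1 (R + j) m (by omega) μ (a t) (ha t), ← EE_mul_const]
    have e1 : R + j + m = j + m + R := by omega
    rw [e1, ← EE_sub, ← EE_window r pk z hR hrpos hrR j m (a t)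
      (dep_mono (by omega) _ (ha t)) μ (fun Z => c t Z - mean t)]
    congr 1
    funext X
    ring
  rw [key]
  refine (EE_CS r pk z hpk0 _ μ hμ0 a (fun t X => h t (Wd R j X))).trans ?_
  have hA : ∑ t, EE R r pk z (j + R) μ (fun X => a t X ^ 2) ≤ Ca := by
    rw [← EE_sum]
    refine (EE_mono r pk z hpk0 _ μ hμ0 _ (fun _ => Ca) hCa).trans ?_
    rw [Nat.add_comm j R, EE_const r pk z hR hrpos hpk1, hμ1, one_mul]
  have hB : ∑ t, EE R r pk z (j + R) μ (fun X => h t (Wd R j X) ^ 2) ≤ (lam ^ m) ^ 2 * Cb := by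
    have h1 : ∀ t, EE R r pk z (j + R) μ (fun X => h t (Wd R j X) ^ 2)
        ≤ (lam ^ m) ^ 2 * EE R r pk z (R + j) μ (fun X => b t X ^ 2) := by
      intro t
      have h2 := EE_shift r pk z hR hrpos hrR 0 j μ (fun X => h t (Wd R 0 X) ^ 2)
      rw [Function.iterate_fixed hst] at h2
      have h3 : (fun X : ℕ → Fin d => h t (Wd R 0 (Shf j X)) ^ 2)
          = fun X => h t (Wd R j X) ^ 2 := by
        funext X
        congr 2
        funext i
        simp [Wd, Shf]
      rw [h3, Nat.add_zero, Nat.add_comm R j, EE_base] at h2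
      rw [h2]
      have h4 : ∀ Z : Fin R → Fin d, Wd R 0 (ex z Z) = Z := by
        intro Z
        funext i
        unfold Wd
        rw [Nat.zero_add, ex_pos _ _ _ i.2]
      simp only [h4]
      have h5 : ∑ Z, μ Z * (c t Z - mean t) = 0 := by
        simp only [mul_sub, Finset.sum_sub_distrib]
        rw [← Finset.sum_mul, hμ1, one_mul, sub_self]
      refine (PT_iter r pk z hμpos hst hop m _ h5).trans ?_
      refine mul_le_mul_of_nonneg_left (le_trans ?_ (hc2 t)) (sq_nonneg _)
      have h6 : ∑ Z, μ Z * (c t Z - mean t) ^ 2 = ∑ Z, μ Z * c t Z ^ 2 - mean t ^ 2 := by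
        have : ∀ Z, μ Z * (c t Z - mean t) ^ 2
            = μ Z * c t Z ^ 2 - 2 * mean t * (μ Z * c t Z) + mean t ^ 2 * μ Z := fun Z => by ring
        simp only [this, Finset.sum_add_distrib, Finset.sum_sub_distrib, ← Finset.mul_sum, hμ1]
        have : ∑ Z, μ Z * c t Z = mean t := rfl
        rw [this]
        ring
      rw [h6]
      linarith [sq_nonneg (mean t)]
    refine (Finset.sum_le_sum fun t _ => h1 t).trans ?_
    rw [← Finset.mul_sum]
    refine mul_le_mul_of_nonneg_left ?_ (sq_nonneg _)
    rw [← EE_sum]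
    refine (EE_mono r pk z hpk0 _ μ hμ0 _ (fun _ => Cb) hCb).trans ?_
    rw [EE_const r pk z hR hrpos hpk1, hμ1, one_mul]
  have hB0 : 0 ≤ ∑ t, EE R r pk z (j + R) μ (fun X => h t (Wd R j X) ^ 2) := by
    refine Finset.sum_nonneg fun t _ => Finset.sum_nonneg fun x _ => mul_nonneg ?_ (sq_nonneg _)
    exact mul_nonneg (hμ0 _) (Finset.prod_nonneg fun _ _ => hpk0 _ _)
  have hCa0 : 0 ≤ Ca := (Finset.sum_nonneg fun t _ => sq_nonneg (a t (fun _ => z))).trans (hCa _)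
  exact mul_le_mul hA hB hB0 hCa0

theorem Pop_iter_sub (hR : 0 < R) (hrpos : ∀ k, 0 < r k) (s : ℕ) (η ν : (Fin R → Fin d) → ℝ) :
    (Pop r pk hR hrpos)^[s] (fun Z => η Z - ν Z)
      = fun Z => (Pop r pk hR hrpos)^[s] η Z - (Pop r pk hR hrpos)^[s] ν Z := by
  induction s generalizing η ν with
  | zero => rfl
  | succ s ih =>
    simp only [Function.iterate_succ_apply]
    rw [← ih]
    congr 1
    funext Z
    simp only [Pop, mul_sub, Finset.sum_sub_distrib]

theorem goodL {hR : 0 < R} {hrpos : ∀ k, 0 < r k} (hrR : ∀ i, r i ≤ R)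
    (hpk0 : ∀ Y e, 0 ≤ pk Y e) (hpk1 : ∀ Y, ∑ e, pk Y e = 1)
    {μ0 : (Fin R → Fin d) → ℝ} (hμ01 : ∑ Z, μ0 Z = 1)
    {μ : (Fin R → Fin d) → ℝ} (hμpos : ∀ Z, 0 < μ Z) (hμ1 : ∑ Z, μ Z = 1)
    (hst : Pop r pk hR hrpos μ = μ) {lam : ℝ} (hlam0 : 0 ≤ lam)
    (hop : ∀ v : (Fin R → Fin d) → ℝ,
      Real.sqrt (∑ Z', Matrix.mulVec (specA d n R hR r hrpos pk μ) v Z' ^ 2)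
        ≤ lam * Real.sqrt (∑ Z, v Z ^ 2))
    {τ : Type*} [Fintype τ] (j m s : ℕ) (hm : R ≤ m) (a b : τ → (ℕ → Fin d) → ℝ)
    (ha : ∀ t, Dep (R + j) (a t)) (hb : ∀ t, Dep (R + j) (b t)) (Ca Cb C : ℝ)
    (hCa : ∀ X, ∑ t, a t X ^ 2 ≤ Ca) (hCb : ∀ X, ∑ t, b t X ^ 2 ≤ Cb) (hC0 : 0 ≤ C)
    (hC : Ca * Cb = C ^ 2) (habs : ∀ X Y, |∑ t, a t X * b t Y| ≤ C) :
    |EE R r pk z (j + m + (R + j) + s) μ0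
        (fun X => ∑ t, a t (Shf s X) * b t (Shf (s + (j + m)) X))
      - ∑ t, EE R r pk z (R + j) μ (a t) * EE R r pk z (R + j) μ (b t)|
      ≤ C * (lam ^ s * Real.sqrt (chiSq μ0 μ) + lam ^ m) := by
  set F : (ℕ → Fin d) → ℝ := fun X => ∑ t, a t X * b t (Shf (j + m) X) with hF
  set BB := ∑ t, EE R r pk z (R + j) μ (a t) * EE R r pk z (R + j) μ (b t)
  have h1 : EE R r pk z (j + m + (R + j) + s) μ0
        (fun X => ∑ t, a t (Shf s X) * b t (Shf (s + (j + m)) X))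
      = EE R r pk z (j + m + (R + j)) ((Pop r pk hR hrpos)^[s] μ0) F := by
    have e : j + m + (R + j) = R + (j + m + j) := by omega
    rw [e, ← EE_shift r pk z hR hrpos hrR (j + m + j) s μ0 F]
    congr 1
    funext X
    refine Finset.sum_congr rfl fun t _ => ?_
    congr 2
    funext i
    simp [Shf, Nat.add_assoc]
  rw [h1]
  have h2 := covL r pk z (hR := hR) (hrpos := hrpos) hrR hpk0 hpk1 hμpos hμ1 hst hop j m hm
    a b ha hb Ca Cb hCa hCb
  have h3 : |EE R r pk z (j + m + (R + j)) μ F - BB| ≤ C * lam ^ m := by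
    refine abs_le_of_sq_le_sq (h2.trans (le_of_eq ?_)) (by positivity)
    calc _ = (Ca * Cb) * (lam ^ m) ^ 2 := by ring
      _ = _ := by rw [hC]; ring
  have h4 : |EE R r pk z (j + m + (R + j)) ((Pop r pk hR hrpos)^[s] μ0) F
      - EE R r pk z (j + m + (R + j)) μ F| ≤ C * (lam ^ s * Real.sqrt (chiSq μ0 μ)) := by
    rw [← EE_sub_init]
    have e : j + m + (R + j) = R + (j + m + j) := by omega
    rw [e]
    refine (EE_abs r pk z hR hrpos hpk0 hpk1 _ _ F C fun X => habs _ _).trans ?_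
    rw [mul_comm]
    refine mul_le_mul_of_nonneg_left ?_ hC0
    have h5 := Pop_iter r pk hpk1 hμpos hop s (fun Z => μ0 Z - μ Z)
      (by rw [Finset.sum_sub_distrib, hμ01, hμ1, sub_self])
    rw [Pop_iter_sub, Function.iterate_fixed hst] at h5
    have h6 := (l1_bound μ (fun Z => (Pop r pk hR hrpos)^[s] μ0 Z - μ Z) hμpos hμ1).trans h5
    refine le_of_sq_le_sq ?_ (by positivity)
    refine h6.trans (le_of_eq ?_)
    rw [mul_pow, Real.sq_sqrt]
    · rfl
    · exact Finset.sum_nonneg fun Z _ => div_nonneg (sq_nonneg _) (hμpos Z).le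
  calc _ = |(EE R r pk z (j + m + (R + j)) ((Pop r pk hR hrpos)^[s] μ0) F
      - EE R r pk z (j + m + (R + j)) μ F) + (EE R r pk z (j + m + (R + j)) μ F - BB)| := by
        congr 1; ring
    _ ≤ _ := (abs_add_le _ _).trans (by linarith)

theorem geom_inj {lam : ℝ} (h0 : 0 ≤ lam) (h1 : lam < 1) (s : Finset ℕ) (g : ℕ → ℕ)
    (hg : Set.InjOn g s) : ∑ i ∈ s, lam ^ g i ≤ 1 / (1 - lam) := by
  rw [← Finset.sum_image (f := fun i => lam ^ i) hg, one_div, ← tsum_geometric_of_lt_one h0 h1]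
  exact (summable_geometric_of_lt_one h0 h1).sum_le_tsum _ fun i _ => pow_nonneg h0 i

end chain2

section kernel

variable {d : ℕ} {ι : Type} [Fintype ι] [DecidableEq ι]

/-- attention weight on token `kk` -/
noncomputable def vv (M : ℕ) (s : ℕ → ℝ) (X : ℕ → Fin d) (kk : Fin d) : ℝ :=
  ∑ j ∈ Finset.Icc 1 M, s j * (if X (M - j) = kk then (1 : ℝ) else 0)

/-- product feature -/
noncomputable def ua (M : ℕ) (σ : ι → ℕ → ℝ) (f : ι → Fin d) (X : ℕ → Fin d) : ℝ :=
  ∏ h, vv M (σ h) X (f h)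

/-- token feature, first window -/
noncomputable def fa (k : Option (Fin d)) (y : Fin d) : ℝ :=
  k.elim 1 (fun k => if y = k then 1 else 0)

/-- token feature, second window -/
noncomputable def fb (q : Fin d → ℝ) (k : Option (Fin d)) (y : Fin d) : ℝ :=
  k.elim (-1) (fun k => (if y = k then 1 else 0) / q k)

theorem ua_pair (M : ℕ) (σ σt : ι → ℕ → ℝ) (X Y : ℕ → Fin d) :
    ∑ f : ι → Fin d, ua M σ f X * ua M σt f Y
      = ∏ h, ∑ kk, vv M (σ h) X kk * vv M (σt h) Y kk := by
  rw [Finset.prod_univ_sum, Fintype.piFinset_univ]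
  simp only [ua, Finset.prod_mul_distrib]

theorem vv_sq (M : ℕ) (s : ℕ → ℝ) (h0 : ∀ i, 0 ≤ s i) (h1 : ∑ i ∈ Finset.Icc 1 M, s i = 1)
    (X : ℕ → Fin d) : ∑ kk, vv M s X kk * vv M s X kk ≤ 1 := by
  have hs : ∑ kk, vv M s X kk = 1 := by
    unfold vv
    rw [Finset.sum_comm]
    simpa using h1
  have hn : ∀ kk, 0 ≤ vv M s X kk := fun kk =>
    Finset.sum_nonneg fun j _ => mul_nonneg (h0 j) (by split_ifs <;> norm_num)
  have hl : ∀ kk, vv M s X kk ≤ 1 := fun kk => by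
    rw [← hs]
    exact Finset.single_le_sum (fun k _ => hn k) (Finset.mem_univ kk)
  rw [← hs]
  exact Finset.sum_le_sum fun kk _ => mul_le_of_le_one_left (hn kk) (hl kk)

theorem ua_sq (M : ℕ) (σ : ι → ℕ → ℝ)
    (hσ : ∀ h, (∀ i, 0 ≤ σ h i) ∧ ∑ i ∈ Finset.Icc 1 M, σ h i = 1) (X : ℕ → Fin d) :
    ∑ f : ι → Fin d, ua M σ f X ^ 2 ≤ 1 := by
  simp only [sq]
  rw [ua_pair]
  refine Finset.prod_le_one (fun h _ => Finset.sum_nonneg fun k _ => mul_self_nonneg _) ?_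
  exact fun h _ => vv_sq M (σ h) (hσ h).1 (hσ h).2 X

theorem ua_dep (M : ℕ) (σ : ι → ℕ → ℝ) (f : ι → Fin d) (X Y : ℕ → Fin d)
    (h : ∀ i < M + 1, X i = Y i) : ua M σ f X = ua M σ f Y := by
  unfold ua vv
  refine Finset.prod_congr rfl fun t _ => Finset.sum_congr rfl fun j _ => ?_
  rw [h (M - j) (by omega)]

theorem fa_sq (y : Fin d) : ∑ k, fa k y ^ 2 ≤ 2 := by
  rw [Fintype.sum_option]
  simp [fa]
  norm_num

theorem fb_sq (q : Fin d → ℝ) (γ : ℝ) (hγ : 0 < γ) (hγ1 : γ ≤ 1) (hq : ∀ e, γ ≤ q e) (y : Fin d) :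
    ∑ k, fb q k y ^ 2 ≤ 2 / γ ^ 2 := by
  rw [Fintype.sum_option]
  have h1 : ∑ k, fb q (some k) y ^ 2 = 1 / q y ^ 2 := by
    rw [Finset.sum_eq_single y]
    · simp [fb]
    · intro k _ hk
      simp [fb, hk.symm]
    · simp
  rw [h1]
  have h2 : 1 / q y ^ 2 ≤ 1 / γ ^ 2 :=
    one_div_le_one_div_of_le (by positivity) (pow_le_pow_left₀ hγ.le (hq y) 2)
  have h3 : (1 : ℝ) ≤ 1 / γ ^ 2 := by
    rw [le_div_iff₀ (by positivity), one_mul]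
    exact pow_le_one₀ hγ.le hγ1
  have h4 : fb q none y ^ 2 = 1 := by simp [fb]
  rw [h4]
  have : 2 / γ ^ 2 = 1 / γ ^ 2 + 1 / γ ^ 2 := by ring
  linarith

theorem fab (q : Fin d → ℝ) (x y : Fin d) :
    ∑ k, fa k x * fb q k y = (∑ k, (if y = k ∧ x = k then (1 : ℝ) else 0) / q k) - 1 := by
  rw [Fintype.sum_option]
  have : ∀ k, fa (some k) x * fb q (some k) y = (if y = k ∧ x = k then (1 : ℝ) else 0) / q k := by
    intro k
    by_cases h1 : x = k <;> by_cases h2 : y = k <;> simp [fa, fb, h1, h2]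
  simp only [this]
  simp [fa, fb]
  ring

theorem prod_split {α β : Type*} [Fintype α] [Fintype β] (u : α → ℝ) (v : β → ℝ) :
    ∑ t : α × β, u t.1 * v t.2 = (∑ k, u k) * ∑ f, v f := by
  rw [Finset.sum_mul_sum, Fintype.sum_prod_type]

end kernel

theorem final_num (L M γ D lam P E : ℝ) (hL : 0 < L) (hM : 0 ≤ M) (hML : 2 * M ≤ L) (hγ : 0 < γ)
    (hlam1 : lam < 1) (hD : 0 ≤ D) (hP : 0 < P) (hPγ : P ≤ γ)
    (hE : E ≤ 2 / γ * ((Real.sqrt D + 1) * (1 / (1 - lam))) + M * (4 / γ)) :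
    E / (L - M) ≤ 8 * M / (L * γ) + 16 * Real.sqrt (D + 1) / (L * (1 - lam) * P) := by
  have hl : 0 < 1 - lam := by linarith
  have hLM : 0 < L - M := by linarith
  have h1 : Real.sqrt D ≤ Real.sqrt (D + 1) := Real.sqrt_le_sqrt (by linarith)
  have h2 : 1 ≤ Real.sqrt (D + 1) := by
    rw [Real.one_le_sqrt]; linarith
  set Q := Real.sqrt (D + 1)
  have h3 : 2 / γ * ((Real.sqrt D + 1) * (1 / (1 - lam))) ≤ 8 * Q / ((1 - lam) * P) := by
    calc _ ≤ 2 / γ * ((Q + Q) * (1 / (1 - lam))) := by gcongr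
      _ = 4 * Q / ((1 - lam) * γ) := by field_simp; ring
      _ ≤ 8 * Q / ((1 - lam) * P) := by
        gcongr
        linarith
  have h4 : 0 ≤ 8 * Q / ((1 - lam) * P) + M * (4 / γ) := by positivity
  calc E / (L - M) ≤ (8 * Q / ((1 - lam) * P) + M * (4 / γ)) / (L - M) := by
        gcongr; linarith
    _ ≤ (8 * Q / ((1 - lam) * P) + M * (4 / γ)) / (L / 2) := by
        gcongr; linarith
    _ = _ := by field_simp; ring

/-- Replacing the empirical average over positions `l = M+1,…,L` of the
chain by an expectation over two independent copies of the stationary window distribution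
incurs an error of at most `8M/(Lγ) + 16√(D₀+1)/(L(1−λ)γ^{|S|/2+1})`. -/
theorem statement13
    (d n R M L : ℕ) (hd : 0 < d) (hn : 0 < n) (hR : 0 < R)
    (r : Fin n → ℕ) (hrpos : ∀ i, 0 < r i) (hrmono : StrictMono r)
    (hrR : ∀ i, r i ≤ R) (hRmax : ∃ i, r i = R)
    (pk : (Fin n → Fin d) → Fin d → ℝ)
    (hpk0 : ∀ Y e, 0 ≤ pk Y e) (hpk1 : ∀ Y, ∑ e, pk Y e = 1)
    (μ0 : (Fin R → Fin d) → ℝ) (hμ00 : ∀ Z, 0 ≤ μ0 Z) (hμ01 : ∑ Z, μ0 Z = 1)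
    (μ : (Fin R → Fin d) → ℝ) (hμpos : ∀ Z, 0 < μ Z) (hμ1 : ∑ Z, μ Z = 1)
    (hstat : ∀ Z', μ Z' = ∑ Z, windowMatrix d n R hR r hrpos pk Z' Z * μ Z)
    (lam : ℝ) (hlam0 : 0 ≤ lam) (hlam1 : lam < 1)
    (hop : ∀ v : (Fin R → Fin d) → ℝ,
      Real.sqrt (∑ Z', Matrix.mulVec (specA d n R hR r hrpos pk μ) v Z' ^ 2)
        ≤ lam * Real.sqrt (∑ Z, v Z ^ 2))
    (γ : ℝ) (hγ : 0 < γ) (hpkγ : ∀ Y e, γ ≤ pk Y e)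
    (hRM : R ≤ M) (hML : 2 * M ≤ L) (hML1 : M + 1 ≤ L)
    (ι : Type) [Fintype ι]
    (σ σt : ι → ℕ → ℝ)
    (hσ : ∀ h, (∀ i, 0 ≤ σ h i) ∧ ∑ i ∈ Finset.Icc 1 M, σ h i = 1)
    (hσt : ∀ h, (∀ i, 0 ≤ σt h i) ∧ ∑ i ∈ Finset.Icc 1 M, σt h i = 1) :
    let p := ngramProb d n R (L + 1) r pk μ0 (by omega);
    let mubar := ngramProb d n R (M + 1) r pk μ (by omega);
    let q : Fin d → ℝ := tokenMarg d M mubar;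
    let A := (∑ l ∈ (Finset.Ico M L).attach,
        ∑ x : Fin (L + 1) → Fin d, p x *
          (((∑ k : Fin d,
              (if x ⟨L, Nat.lt_succ_self L⟩ = k ∧ x ⟨l.1, icoLtSucc l⟩ = k then (1 : ℝ) else 0) /
                q k) - 1) *
            ∏ h : ι, ∑ kk : Fin d,
              (∑ j ∈ Finset.Icc 1 M, σ h j *
                  (if x ⟨l.1 - j, lt_of_le_of_lt (Nat.sub_le _ _) (icoLtSucc l)⟩ = kk
                    then (1 : ℝ) else 0)) *
              (∑ i ∈ Finset.Icc 1 M, σt h i *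
                  (if x ⟨L - i, Nat.lt_succ_of_le (Nat.sub_le _ _)⟩ = kk
                    then (1 : ℝ) else 0)))) /
      ((L : ℝ) - M);
    let B := ∑ y : Fin (M + 1) → Fin d, ∑ y' : Fin (M + 1) → Fin d,
      mubar y * mubar y' *
        (((∑ k : Fin d,
            (if y ⟨M, Nat.lt_succ_self M⟩ = k ∧ y' ⟨M, Nat.lt_succ_self M⟩ = k
              then (1 : ℝ) else 0) / q k) - 1) *
          ∏ h : ι, ∑ kk : Fin d,
            (∑ i ∈ Finset.Icc 1 M, σt h i *
                (if y' ⟨M - i, Nat.lt_succ_of_le (Nat.sub_le _ _)⟩ = kk then (1 : ℝ) else 0)) *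
            (∑ j ∈ Finset.Icc 1 M, σ h j *
                (if y ⟨M - j, Nat.lt_succ_of_le (Nat.sub_le _ _)⟩ = kk then (1 : ℝ) else 0)));
    |A - B| ≤ 8 * M / (L * γ) +
      16 * Real.sqrt (chiSq μ0 μ + 1) /
        (L * (1 - lam) * γ ^ ((Fintype.card ι : ℝ) / 2 + 1)) := by
  classical
  intro p mubar q A B
  set z : Fin d := ⟨0, hd⟩ with hz
  have hst : Pop r pk hR hrpos μ = μ := by
    funext Z'
    exact (hstat Z').symm
  have hμ0 : ∀ Z, 0 ≤ μ Z := fun Z => (hμpos Z).le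
  have hγ1 : γ ≤ 1 := by
    rw [← hpk1 (fun _ => z)]
    exact (hpkγ _ z).trans (Finset.single_le_sum (fun e _ => hpk0 _ e) (Finset.mem_univ z))
  obtain ⟨j, hj⟩ : ∃ j, M + 1 = R + j := ⟨M + 1 - R, by omega⟩
  have hq : ∀ e, γ ≤ q e := by
    intro e
    have h1 : q e = EE R r pk z (M + 1) μ (fun X => if X M = e then 1 else 0) := by
      show tokenMarg d M mubar e = _
      unfold tokenMarg EE
      refine Finset.sum_congr rfl fun y _ => ?_
      beta_reduce
      rw [ex_pos z y M (Nat.lt_succ_self M), ← ngram_eq r pk μ (by omega) z y]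
      split_ifs <;> simp [mubar]
    rw [h1, EE_succ r pk z hR hrpos _ hRM]
    have h2 : γ = EE R r pk z M μ (fun _ => γ) := by
      obtain ⟨i, hi⟩ : ∃ i, M = R + i := ⟨M - R, by omega⟩
      rw [hi, EE_const r pk z hR hrpos hpk1, hμ1, one_mul]
    rw [h2]
    refine EE_mono r pk z hpk0 _ μ hμ0 _ _ fun X => ?_
    unfold Av
    simp only [Function.update_self, mul_ite, mul_one, mul_zero, Finset.sum_ite_eq',
      Finset.mem_univ, if_true]
    exact hpkγ _ _
  let a : Option (Fin d) × (ι → Fin d) → (ℕ → Fin d) → ℝ :=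
    fun t X => fa t.1 (X M) * ua M σ t.2 X
  let b : Option (Fin d) × (ι → Fin d) → (ℕ → Fin d) → ℝ :=
    fun t X => fb q t.1 (X M) * ua M σt t.2 X
  have hab : ∀ X Y, ∑ t, a t X * b t Y =
      ((∑ k : Fin d, (if Y M = k ∧ X M = k then (1 : ℝ) else 0) / q k) - 1) *
        ∏ h : ι, ∑ kk, vv M (σ h) X kk * vv M (σt h) Y kk := by
    intro X Y
    rw [← fab, ← ua_pair, ← prod_split]
    refine Finset.sum_congr rfl fun t _ => ?_
    simp only [a, b]
    ring
  have ha : ∀ t, Dep (R + j) (a t) := by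
    intro t X Y h
    simp only [a]
    rw [h M (by omega), ua_dep M σ t.2 X Y (fun i hi => h i (by omega))]
  have hb : ∀ t, Dep (R + j) (b t) := by
    intro t X Y h
    simp only [b]
    rw [h M (by omega), ua_dep M σt t.2 X Y (fun i hi => h i (by omega))]
  have hCa : ∀ X, ∑ t, a t X ^ 2 ≤ 2 := by
    intro X
    simp only [a, mul_pow]
    rw [prod_split (fun k => fa k (X M) ^ 2) (fun f => ua M σ f X ^ 2)]
    calc _ ≤ (2 : ℝ) * 1 := mul_le_mul (fa_sq _) (ua_sq M σ hσ X)
          (Finset.sum_nonneg fun _ _ => sq_nonneg _) (by norm_num)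
      _ = 2 := mul_one _
  have hCb : ∀ X, ∑ t, b t X ^ 2 ≤ 2 / γ ^ 2 := by
    intro X
    simp only [b, mul_pow]
    rw [prod_split (fun k => fb q k (X M) ^ 2) (fun f => ua M σt f X ^ 2)]
    calc _ ≤ (2 / γ ^ 2) * 1 := mul_le_mul (fb_sq q γ hγ hγ1 hq _) (ua_sq M σt hσt X)
          (Finset.sum_nonneg fun _ _ => sq_nonneg _) (by positivity)
      _ = _ := mul_one _
  have hC : (2 : ℝ) * (2 / γ ^ 2) = (2 / γ) ^ 2 := by field_simp
  have hC0 : 0 ≤ 2 / γ := by positivity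
  have habs : ∀ X Y, |∑ t, a t X * b t Y| ≤ 2 / γ := by
    intro X Y
    refine abs_le_of_sq_le_sq ?_ hC0
    refine (Finset.sum_mul_sq_le_sq_mul_sq Finset.univ (fun t => a t X) (fun t => b t Y)).trans ?_
    rw [← hC]
    exact mul_le_mul (hCa X) (hCb Y) (Finset.sum_nonneg fun _ _ => sq_nonneg _) (by norm_num)
  -- rewriting of B
  have hB : B = ∑ t, EE R r pk z (R + j) μ (a t) * EE R r pk z (R + j) μ (b t) := by
    have e1 : ∀ y y' : Fin (M + 1) → Fin d,
        (((∑ k : Fin d,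
            (if y ⟨M, Nat.lt_succ_self M⟩ = k ∧ y' ⟨M, Nat.lt_succ_self M⟩ = k
              then (1 : ℝ) else 0) / q k) - 1) *
          ∏ h : ι, ∑ kk : Fin d,
            (∑ i ∈ Finset.Icc 1 M, σt h i *
                (if y' ⟨M - i, Nat.lt_succ_of_le (Nat.sub_le _ _)⟩ = kk then (1 : ℝ) else 0)) *
            (∑ j ∈ Finset.Icc 1 M, σ h j *
                (if y ⟨M - j, Nat.lt_succ_of_le (Nat.sub_le _ _)⟩ = kk then (1 : ℝ) else 0)))
        = ∑ t, a t (ex z y) * b t (ex z y') := by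
      intro y y'
      rw [hab, ex_pos z y M (Nat.lt_succ_self M), ex_pos z y' M (Nat.lt_succ_self M)]
      congr 1
      · congr 1
        refine Finset.sum_congr rfl fun k _ => ?_
        simp only [and_comm]
      · refine Finset.prod_congr rfl fun h _ => Finset.sum_congr rfl fun kk _ => ?_
        rw [mul_comm]
        unfold vv
        congr 1
        · refine Finset.sum_congr rfl fun i _ => ?_
          rw [ex_pos z y (M - i) (by omega)]
        · refine Finset.sum_congr rfl fun i _ => ?_
          rw [ex_pos z y' (M - i) (by omega)]
    simp only [B]
    simp only [e1]
    rw [← hj]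
    unfold EE
    simp only [← ngram_eq r pk μ (by omega : R ≤ M + 1) z]
    simp only [Finset.sum_mul_sum]
    rw [Finset.sum_comm (s := (Finset.univ : Finset (Option (Fin d) × (ι → Fin d))))]
    refine Finset.sum_congr rfl fun y _ => ?_
    rw [Finset.sum_comm (s := (Finset.univ : Finset (Option (Fin d) × (ι → Fin d))))]
    refine Finset.sum_congr rfl fun y' _ => ?_
    rw [Finset.mul_sum]
    refine Finset.sum_congr rfl fun t _ => ?_
    simp only [mubar]
    ring
  -- rewriting of A
  let Φ : ℕ → ℝ := fun l => EE R r pk z (L + 1) μ0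
    (fun X => ∑ t, a t (Shf (l - M) X) * b t (Shf (L - M) X))
  have hA : A = (∑ l ∈ Finset.Ico M L, Φ l) / ((L : ℝ) - M) := by
    simp only [A]
    congr 1
    rw [← Finset.sum_attach (Finset.Ico M L) Φ]
    refine Finset.sum_congr rfl fun l _ => ?_
    obtain ⟨hl1, hl2⟩ := Finset.mem_Ico.mp l.2
    simp only [Φ]
    unfold EE
    refine Finset.sum_congr rfl fun x _ => ?_
    rw [← ngram_eq r pk μ0 (by omega : R ≤ L + 1) z]
    congr 1
    beta_reduce
    rw [hab]
    have s1 : Shf (L - M) (ex z x) M = x ⟨L, Nat.lt_succ_self L⟩ := by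
      unfold Shf
      rw [← ex_pos z x L (Nat.lt_succ_self L)]
      congr 1; omega
    have s2 : Shf (l.1 - M) (ex z x) M = x ⟨l.1, icoLtSucc l⟩ := by
      unfold Shf
      rw [← ex_pos z x l.1 (icoLtSucc l)]
      congr 1; omega
    rw [s1, s2]
    congr 1
    refine Finset.prod_congr rfl fun h _ => Finset.sum_congr rfl fun kk _ => ?_
    unfold vv
    congr 1
    · refine Finset.sum_congr rfl fun i hi => ?_
      have hi := (Finset.mem_Icc.mp hi).2
      rw [← ex_pos z x (l.1 - i) _]
      unfold Shf
      have e : l.1 - i = l.1 - M + (M - i) := by omega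
      rw [e]
    · refine Finset.sum_congr rfl fun i hi => ?_
      have hi := (Finset.mem_Icc.mp hi).2
      rw [← ex_pos z x (L - i) _]
      unfold Shf
      have e : L - i = L - M + (M - i) := by omega
      rw [e]
  have hBabs : |B| ≤ 2 / γ := by
    rw [hB, ← hj]
    have e1 : ∑ t, EE R r pk z (M + 1) μ (a t) * EE R r pk z (M + 1) μ (b t)
        = EE R r pk z (M + 1) μ (fun X => EE R r pk z (M + 1) μ (fun Y => ∑ t, a t X * b t Y)) := by
      simp only [EE_sum]
      refine Finset.sum_congr rfl fun t _ => ?_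
      rw [← EE_mul_const]
      congr 1
      funext X
      rw [mul_comm, ← EE_mul_const]
      congr 1
      funext Y
      ring
    rw [e1, hj]
    have hone : ∑ Z, |μ Z| = 1 := by
      simp only [abs_of_nonneg (hμ0 _), hμ1]
    have h2 : ∀ F : (ℕ → Fin d) → ℝ, (∀ X, |F X| ≤ 2 / γ) →
        |EE R r pk z (R + j) μ F| ≤ 2 / γ := fun F hF => by
      have := EE_abs r pk z hR hrpos hpk0 hpk1 j μ F (2 / γ) hF
      rwa [hone, one_mul] at this
    exact h2 _ fun X => h2 _ fun Y => habs X Y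
  have hΦabs : ∀ l, |Φ l| ≤ 2 / γ := by
    intro l
    obtain ⟨i, hi⟩ : ∃ i, L + 1 = R + i := ⟨L + 1 - R, by omega⟩
    simp only [Φ]
    rw [hi]
    refine (EE_abs r pk z hR hrpos hpk0 hpk1 i μ0 _ (2 / γ) fun X => habs _ _).trans ?_
    simp only [abs_of_nonneg (hμ00 _), hμ01, one_mul]
    exact le_rfl
  have hgood : ∀ l ∈ Finset.Ico M (L - M), |Φ l - B| ≤
      2 / γ * (lam ^ (l - M) * Real.sqrt (chiSq μ0 μ) + lam ^ (L - M - 1 - l)) := by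
    intro l hl
    obtain ⟨hl1, hl2⟩ := Finset.mem_Ico.mp hl
    obtain ⟨m, hm⟩ : ∃ m, L - l = j + m := ⟨L - l - j, by omega⟩
    have h := goodL r pk z (hR := hR) (hrpos := hrpos) hrR hpk0 hpk1 hμ01 hμpos hμ1 hst hlam0 hop
      j m (l - M) (by omega) a b ha hb 2 (2 / γ ^ 2) (2 / γ) hCa hCb hC0 hC habs
    have e1 : j + m + (R + j) + (l - M) = L + 1 := by omega
    have e2 : l - M + (j + m) = L - M := by omega
    rw [e1, e2, ← hB] at h
    refine h.trans ?_
    gcongr 2 / γ * (_ + ?_)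
    exact pow_le_pow_of_le_one hlam0 hlam1.le (by omega)
  have hD : 0 ≤ chiSq μ0 μ :=
    Finset.sum_nonneg fun Z _ => div_nonneg (sq_nonneg _) (hμ0 Z)
  have hsum : ∑ l ∈ Finset.Ico M L, |Φ l - B| ≤
      2 / γ * ((Real.sqrt (chiSq μ0 μ) + 1) * (1 / (1 - lam))) + M * (4 / γ) := by
    rw [← Finset.sum_Ico_consecutive _ (by omega : M ≤ L - M) (by omega : L - M ≤ L)]
    refine add_le_add ?_ ?_
    · refine (Finset.sum_le_sum hgood).trans ?_
      rw [← Finset.mul_sum, Finset.sum_add_distrib, ← Finset.sum_mul]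
      refine mul_le_mul_of_nonneg_left ?_ hC0
      have g1 := geom_inj hlam0 hlam1 (Finset.Ico M (L - M)) (fun l => l - M) (by
        intro x hx y hy hxy
        simp only [Finset.coe_Ico, Set.mem_Ico] at hx hy hxy
        omega)
      have g2 := geom_inj hlam0 hlam1 (Finset.Ico M (L - M)) (fun l => L - M - 1 - l) (by
        intro x hx y hy hxy
        simp only [Finset.coe_Ico, Set.mem_Ico] at hx hy hxy
        omega)
      have g3 := mul_le_mul_of_nonneg_right g1 (Real.sqrt_nonneg (chiSq μ0 μ))
      linarith
    · have hbad : ∀ l ∈ Finset.Ico (L - M) L, |Φ l - B| ≤ 4 / γ := by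
        intro l _
        refine (abs_sub _ _).trans ?_
        have e : 4 / γ = 2 / γ + 2 / γ := by ring
        rw [e]
        exact add_le_add (hΦabs l) hBabs
      refine (Finset.sum_le_card_nsmul _ _ _ hbad).trans (le_of_eq ?_)
      rw [Nat.card_Ico, nsmul_eq_mul]
      congr 2
      omega
  have hMLr : 2 * (M : ℝ) ≤ L := by exact_mod_cast hML
  have hLpos : (0 : ℝ) < L := by
    have : 0 < L := by omega
    exact_mod_cast this
  have hLM : (0 : ℝ) < (L : ℝ) - M := by
    have : M < L := by omega
    have : (M : ℝ) < L := by exact_mod_cast this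
    linarith
  have hAB : A - B = (∑ l ∈ Finset.Ico M L, (Φ l - B)) / ((L : ℝ) - M) := by
    rw [hA, Finset.sum_sub_distrib, Finset.sum_const, Nat.card_Ico, nsmul_eq_mul,
      Nat.cast_sub (by omega)]
    field_simp
  have hP : γ ^ ((Fintype.card ι : ℝ) / 2 + 1) ≤ γ := by
    calc _ ≤ γ ^ (1 : ℝ) := Real.rpow_le_rpow_of_exponent_ge hγ hγ1 (by
          have : (0 : ℝ) ≤ (Fintype.card ι : ℝ) / 2 := by positivity
          linarith)
      _ = γ := Real.rpow_one γ
  refine le_trans ?_ (final_num L M γ (chiSq μ0 μ) lam _ (∑ l ∈ Finset.Ico M L, |Φ l - B|) hLpos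
    (Nat.cast_nonneg M) hMLr hγ hlam1 hD (Real.rpow_pos_of_pos hγ _) hP hsum)
  rw [hAB, abs_div, abs_of_pos hLM]
  gcongr
  exact Finset.abs_sum_le_sum_abs _ _
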